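/- Let Z = m_1P_1 + ... + m_sP_s be fat points in P^n whose support is contained in an r-dimensional linear subspace α ≅ P^r, and let Z_α be the corresponding fat points in P^r. If there is a non-negative integer b such that reg(Z_α) > b, then reg(Z) > b. -/

import Mathlib

open MvPolynomial

noncomputable section

/-- The defining prime ideal of the point of projective space with homogeneous
coordinates `p`: the ideal generated by the linear forms vanishing at `p`. -/
def pointIdeal {K : Type} [Field K] {N : ℕ} (p : Fin N → K) :
    Ideal (MvPolynomial (Fin N) K) :=
  Ideal.span {f | f.IsHomogeneous 1 ∧ eval p f = 0}

/-- The ideal of the fat point scheme `m₁P₁ + ⋯ + m_sP_s`. -/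
def fatIdeal {K : Type} [Field K] {N s : ℕ} (p : Fin s → Fin N → K) (m : Fin s → ℕ) :
    Ideal (MvPolynomial (Fin N) K) :=
  ⨅ i, pointIdeal (p i) ^ (m i)

/-- `dim_K` of the degree-`t` graded piece of the ideal `I`. -/
def gradedDim (K : Type) [Field K] {N : ℕ} (I : Ideal (MvPolynomial (Fin N) K)) (t : ℕ) : ℕ :=
  Module.finrank K ↥(homogeneousSubmodule (Fin N) K t ⊓ I.restrictScalars K)

/-- The Hilbert function of `R/I` in degree `t`. -/
def hilbFn (K : Type) [Field K] {N : ℕ} (I : Ideal (MvPolynomial (Fin N) K)) (t : ℕ) : ℕ :=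
  Module.finrank K ↥(homogeneousSubmodule (Fin N) K t) - gradedDim K I t

/-- The regularity index of `R/I` relative to the multiplicity `e`:
the least `t` with `H_{R/I}(t) = e`. -/
def regIndex (K : Type) [Field K] {N : ℕ} (I : Ideal (MvPolynomial (Fin N) K)) (e : ℕ) : ℕ :=
  sInf {t | hilbFn K I t = e}

/-- The multiplicity `e(R/I) = ∑ C(mᵢ+n-1, n)` of a fat point scheme in `ℙⁿ`. -/
def fatMult (n : ℕ) {s : ℕ} (m : Fin s → ℕ) : ℕ :=
  ∑ i, (m i + n - 1).choose n

/-- The regularity index of the fat point scheme `m₁P₁ + ⋯ + m_sP_s` in `ℙⁿ`. -/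
def regFat (K : Type) [Field K] {n s : ℕ} (p : Fin s → Fin (n + 1) → K) (m : Fin s → ℕ) : ℕ :=
  regIndex K (fatIdeal p m) (fatMult n m)

/-- The coordinate vectors `p i` represent distinct points of projective space. -/
def ProjDistinct {K : Type} [Field K] {N s : ℕ} (p : Fin s → Fin N → K) : Prop :=
  (∀ i, p i ≠ 0) ∧ ∀ i j, i ≠ j → ∀ c : K, p i ≠ c • p j

/-- The points `p i`, `i ∈ Q`, lie on a `j`-dimensional linear subspace of `ℙⁿ`. -/
def OnLinearSubspace {K : Type} [Field K] {N s : ℕ} (p : Fin s → Fin N → K)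
    (Q : Finset (Fin s)) (j : ℕ) : Prop :=
  ∃ W : Submodule K (Fin N → K), Module.finrank K ↥W ≤ j + 1 ∧ ∀ i ∈ Q, p i ∈ W

open Classical in
/-- The Segre bound `T(Z) = max {T_j(Z) | j = 1,…,n}` for fat points in `ℙⁿ`. -/
def segreBound {K : Type} [Field K] (n : ℕ) {s : ℕ} (p : Fin s → Fin (n + 1) → K)
    (m : Fin s → ℕ) : ℕ :=
  (Finset.Icc 1 n).sup fun j =>
    Finset.univ.powerset.sup fun Q =>
      if Q.Nonempty ∧ OnLinearSubspace p Q j then (∑ i ∈ Q, m i + j - 2) / j else 0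

/-- The standard coordinate point `(1,0,…,0)`. -/
def stdPt (K : Type) [Field K] (N : ℕ) : Fin N → K := fun j => if (j : ℕ) = 0 then 1 else 0


/-! ### Pulling back along linear maps -/

def pull {K : Type} [Field K] {a c : ℕ} (φ : (Fin a → K) →ₗ[K] (Fin c → K)) :
    MvPolynomial (Fin c) K →ₐ[K] MvPolynomial (Fin a) K :=
  aeval (fun j => ∑ i, C (φ (Pi.single i 1) j) * X i)

lemma pull_X_homog {K : Type} [Field K] {a c : ℕ} (φ : (Fin a → K) →ₗ[K] (Fin c → K))
    (j : Fin c) :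
    (∑ i, C (φ (Pi.single i 1) j) * X i : MvPolynomial (Fin a) K).IsHomogeneous 1 :=
  IsHomogeneous.sum _ _ _ fun i _ => isHomogeneous_C_mul_X _ _

lemma pull_homog {K : Type} [Field K] {a c : ℕ} (φ : (Fin a → K) →ₗ[K] (Fin c → K))
    {f : MvPolynomial (Fin c) K} {t : ℕ} (hf : f.IsHomogeneous t) :
    (pull φ f).IsHomogeneous t := by
  have := hf.aeval (fun j => ∑ i, C (φ (Pi.single i 1) j) * X i : _ → MvPolynomial (Fin a) K)
    (n := 1) (pull_X_homog φ)
  simpa [pull] using this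

lemma eval_pull {K : Type} [Field K] {a c : ℕ} (φ : (Fin a → K) →ₗ[K] (Fin c → K))
    (f : MvPolynomial (Fin c) K) (x : Fin a → K) :
    eval x (pull φ f) = eval (φ x) f := by
  have h : (fun j => eval x (∑ i, C (φ (Pi.single i 1) j) * X i : MvPolynomial (Fin a) K))
      = φ x := by
    funext j
    have hx : x = ∑ i, x i • (Pi.single i 1 : Fin a → K) := by
      simpa using (pi_eq_sum_univ' x)
    conv_rhs => rw [hx]
    simp [map_sum, mul_comm]
  induction f using MvPolynomial.induction_on with
  | C r => simp [pull]
  | add f g hf hg => simp [hf, hg]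
  | mul_X f i hf =>
    rw [map_mul, map_mul, hf, map_mul, eval_X, ← h]
    simp [pull]

lemma pull_pull {K : Type} [Field K] [Infinite K] {a c : ℕ} (φ : (Fin a → K) →ₗ[K] (Fin c → K))
    (θ : (Fin c → K) →ₗ[K] (Fin a → K)) (h : ∀ x, θ (φ x) = x) (f : MvPolynomial (Fin a) K) :
    pull φ (pull θ f) = f := by
  apply MvPolynomial.funext
  intro x
  rw [eval_pull, eval_pull, h]

lemma pull_mem_pow {K : Type} [Field K] {a c : ℕ} (φ : (Fin a → K) →ₗ[K] (Fin c → K))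
    (q : Fin a → K) (m : ℕ) {f : MvPolynomial (Fin c) K} (hf : f ∈ pointIdeal (φ q) ^ m) :
    pull φ f ∈ pointIdeal q ^ m := by
  have h1 : (pointIdeal (φ q)).map (pull φ) ≤ pointIdeal q := by
    rw [pointIdeal, Ideal.map_span, Ideal.span_le]
    rintro _ ⟨g, ⟨hg1, hg2⟩, rfl⟩
    exact Ideal.subset_span ⟨pull_homog φ hg1, by rw [← hg2]; exact eval_pull φ g q⟩
  have h2 := Ideal.mem_map_of_mem (pull φ) hf
  rw [Ideal.map_pow] at h2
  exact Ideal.pow_right_mono h1 m h2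

attribute [local instance] MvPolynomial.gradedAlgebra in
lemma pow_component {K : Type} [Field K] {N : ℕ} (p : Fin N → K) (m t : ℕ)
    {f : MvPolynomial (Fin N) K} (hf : f ∈ pointIdeal p ^ m) :
    homogeneousComponent t f ∈ pointIdeal p ^ m := by
  have h : (pointIdeal p).IsHomogeneous (homogeneousSubmodule (Fin N) K) :=
    Ideal.homogeneous_span _ _ fun x hx => ⟨1, hx.1⟩
  have h2 : (pointIdeal p ^ m).IsHomogeneous (homogeneousSubmodule (Fin N) K) := by
    induction m with
    | zero => simpa using Ideal.IsHomogeneous.top _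
    | succ k ih => 
      rw [pow_succ]
      exact Ideal.IsHomogeneous.mul (ih (Ideal.pow_le_pow_right (Nat.le_succ k) hf)) h
  exact homogeneousComponent_mem_of_mem h2 hf t

/-- Surjectivity of the restriction to the fat points in degree `t`. -/
def SurjAt {K : Type} [Field K] {N s : ℕ} (p : Fin s → Fin N → K) (m : Fin s → ℕ) (t : ℕ) :
    Prop :=
  ∀ g : Fin s → MvPolynomial (Fin N) K, (∀ i, (g i).IsHomogeneous t) →
    ∃ f : MvPolynomial (Fin N) K, f.IsHomogeneous t ∧ ∀ i, f - g i ∈ pointIdeal (p i) ^ m i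

lemma SurjAt.pull {K : Type} [Field K] [Infinite K] {a c s t : ℕ}
    (φ : (Fin a → K) →ₗ[K] (Fin c → K)) (hφ : Function.Injective φ)
    (q : Fin s → Fin a → K) (m : Fin s → ℕ)
    (h : SurjAt (fun i => φ (q i)) m t) : SurjAt q m t := by
  obtain ⟨θ, hθ⟩ := φ.exists_leftInverse_of_injective (LinearMap.ker_eq_bot.2 hφ)
  have hθ' : ∀ x, θ (φ x) = x := fun x => LinearMap.congr_fun hθ x
  intro g hg
  obtain ⟨f, hf, hfi⟩ := h (fun i => _root_.pull θ (g i)) fun i => pull_homog θ (hg i)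
  refine ⟨_root_.pull φ f, pull_homog φ hf, fun i => ?_⟩
  have := pull_mem_pow φ (q i) (m i) (hfi i)
  rwa [map_sub, pull_pull φ θ hθ'] at this

/-! ### Existence in large degree -/

lemma sup_mul_sup_le' {R : Type*} [CommRing R] (I J L : Ideal R) :
    (I ⊔ J) * (I ⊔ L) ≤ I ⊔ J * L := by
  rw [Ideal.sup_mul, Ideal.mul_sup J]
  have h1 : I * (I ⊔ L) ≤ I := Ideal.mul_le_left
  have h2 : J * I ≤ I := Ideal.mul_le_right
  exact sup_le (le_trans h1 le_sup_left) (sup_le (le_trans h2 le_sup_left) le_sup_right)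

lemma prod_sup_le' {R ι : Type*} [CommRing R] (I : Ideal R) (S : Finset ι) (J : ι → Ideal R) :
    ∏ j ∈ S, (I ⊔ J j) ≤ I ⊔ ∏ j ∈ S, J j := by
  classical
  induction S using Finset.induction_on with
  | empty => simp
  | insert a S ha ih =>
    rw [Finset.prod_insert ha, Finset.prod_insert ha]
    exact (Ideal.mul_mono_right ih).trans (sup_mul_sup_le' _ _ _)

def linForm {K : Type} [Field K] {N : ℕ} (v : Fin N → K) : MvPolynomial (Fin N) K :=
  ∑ i, C (v i) * X i

lemma linForm_mem {K : Type} [Field K] {N : ℕ} (v p : Fin N → K) (h : ∑ i, v i * p i = 0) :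
    linForm v ∈ pointIdeal p :=
  Ideal.subset_span ⟨IsHomogeneous.sum _ _ _ fun i _ => isHomogeneous_C_mul_X _ _,
    by simpa [linForm] using h⟩

/-- every `X k` lies in the sum of the ideals of two distinct points -/
lemma X_mem_sup {K : Type} [Field K] {N : ℕ} (p q : Fin N → K) (hp : p ≠ 0)
    (hq : ∀ c : K, q ≠ c • p) (k : Fin N) :
    (X k : MvPolynomial (Fin N) K) ∈ pointIdeal p ⊔ pointIdeal q := by
  -- a functional vanishing at `p` but not at `q`
  have hq' : q ∉ Submodule.span K {p} := by
    rw [Submodule.mem_span_singleton]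
    rintro ⟨c, rfl⟩
    exact hq c rfl
  obtain ⟨f, hf, hfp⟩ := Submodule.exists_dual_map_eq_bot_of_notMem hq' inferInstance
  have hfp0 : f p = 0 := by
    have : f p ∈ (Submodule.span K {p}).map f :=
      Submodule.mem_map_of_mem (Submodule.mem_span_singleton_self p)
    rw [hfp] at this
    simpa using this
  have hsum : ∀ x : Fin N → K, ∑ i, f (Pi.single i 1) * x i = f x := by
    intro x
    have hx : x = ∑ i, x i • (Pi.single i 1 : Fin N → K) := by
      simpa using (pi_eq_sum_univ' x)
    conv_rhs => rw [hx]
    simp [map_sum, mul_comm]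
  set v : Fin N → K := fun i => f (Pi.single i 1) with hv
  -- X k = a v + (X k - a v)
  have hX : (X k : MvPolynomial (Fin N) K) = linForm (fun i => (q k / f q) * v i)
      + linForm (fun i => (Pi.single k 1 : Fin N → K) i - (q k / f q) * v i) := by
    rw [linForm, linForm, ← Finset.sum_add_distrib]
    simp only [← add_mul, ← C_add]
    simp [Pi.single_apply]
  rw [hX]
  refine Submodule.add_mem_sup (linForm_mem _ _ ?_) (linForm_mem _ _ ?_)
  · simp only [mul_assoc, ← Finset.mul_sum, hv, hsum, hfp0, mul_zero]
  · simp only [sub_mul, Finset.sum_sub_distrib, mul_assoc, ← Finset.mul_sum, hv, hsum]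
    simp [Pi.single_apply]
    field_simp
    simp

lemma homog_mem_pow {K : Type} [Field K] {N : ℕ} (I : Ideal (MvPolynomial (Fin N) K))
    (hI : ∀ k, X k ∈ I) (t : ℕ) (f : MvPolynomial (Fin N) K) (hf : f.IsHomogeneous t) :
    f ∈ I ^ t := by
  rw [f.as_sum]
  refine Ideal.sum_mem _ fun d hd => ?_
  have hdt : ∑ i, d i = t := by
    have := hf.degree_eq_sum_deg_support hd
    rw [this]
    exact (Finset.sum_subset (Finset.subset_univ _) fun i _ hi => by simpa using hi).symm
  rw [monomial_eq, Finsupp.prod_fintype _ _ (by simp), ← hdt, ← Finset.prod_pow_eq_pow_sum]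
  exact Ideal.mul_mem_left _ _ (Ideal.prod_mem_prod fun i _ => Ideal.pow_mem_pow (hI i) _)

lemma exists_surjAt {K : Type} [Field K] {N s : ℕ} (p : Fin s → Fin N → K) (m : Fin s → ℕ)
    (hp : ProjDistinct p) : ∃ T, ∀ t, T ≤ t → SurjAt p m t := by
  classical
  set M : Ideal (MvPolynomial (Fin N) K) := Ideal.span (Set.range X) with hM
  set J : Fin s → Ideal (MvPolynomial (Fin N) K) := fun i => pointIdeal (p i) ^ m i with hJ
  have h1 : ∀ i j, i ≠ j → M ^ (m i + m j) ≤ J i ⊔ J j := by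
    intro i j hij
    refine le_trans (Ideal.pow_right_mono ?_ _) Ideal.sup_pow_add_le_pow_sup_pow
    rw [hM, Ideal.span_le]
    rintro _ ⟨k, rfl⟩
    exact X_mem_sup _ _ (hp.1 i) (hp.2 j i hij.symm) k
  have h2 : ∀ i, M ^ (∑ j ∈ Finset.univ.erase i, (m i + m j)) ≤
      J i ⊔ ∏ j ∈ Finset.univ.erase i, J j := by
    intro i
    rw [← Finset.prod_pow_eq_pow_sum]
    refine le_trans (Finset.prod_le_prod' fun j hj => ?_) (prod_sup_le' _ _ _)
    exact h1 i j (Finset.ne_of_mem_erase hj).symm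
  refine ⟨∑ i, ∑ j ∈ Finset.univ.erase i, (m i + m j), fun t ht g hg => ?_⟩
  have h3 : ∀ i, ∃ f : MvPolynomial (Fin N) K, f.IsHomogeneous t ∧ f - g i ∈ J i ∧
      ∀ j, j ≠ i → f ∈ J j := by
    intro i
    have hgi : g i ∈ J i ⊔ ∏ j ∈ Finset.univ.erase i, J j := by
      refine h2 i (Ideal.pow_le_pow_right (le_trans ?_ ht) 
        (homog_mem_pow M (fun k => Ideal.subset_span ⟨k, rfl⟩) t _ (hg i)))
      exact Finset.single_le_sum (f := fun i => ∑ j ∈ Finset.univ.erase i, (m i + m j))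
        (fun _ _ => Nat.zero_le _) (Finset.mem_univ i)
    obtain ⟨x, hx, y, hy, hxy⟩ := Submodule.mem_sup.1 hgi
    refine ⟨homogeneousComponent t y, homogeneousComponent_isHomogeneous _ _, ?_, ?_⟩
    · have : homogeneousComponent t y - g i = - homogeneousComponent t x := by
        rw [← homogeneousComponent_eq_self (hg i), ← hxy, map_add]
        simp
      rw [this]
      exact neg_mem (pow_component _ _ _ hx)
    · intro j hj
      refine pow_component _ _ _ ?_
      exact (Finset.inf_le (f := J) (Finset.mem_erase.2 ⟨hj, Finset.mem_univ _⟩)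
        : _ ≤ J j) (Ideal.prod_le_inf hy)
  choose f hf1 hf2 hf3 using h3
  refine ⟨∑ i, f i, IsHomogeneous.sum _ _ _ fun i _ => hf1 i, fun i => ?_⟩
  rw [← Finset.add_sum_erase _ _ (Finset.mem_univ i), add_sub_right_comm]
  exact Ideal.add_mem _ (hf2 i) (Ideal.sum_mem _ fun j hj =>
    hf3 j i (Finset.ne_of_mem_erase hj).symm)

/-! ### Local Hilbert function at a point -/

/-- total exponent of the variables other than `X 0` -/
def wt {n : ℕ} (d : Fin (n + 1) →₀ ℕ) : ℕ := ∑ i : Fin n, d i.succ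

lemma wt_add {n : ℕ} (d e : Fin (n + 1) →₀ ℕ) : wt (d + e) = wt d + wt e := by
  simp [wt, Finset.sum_add_distrib]

lemma degree_wt {n : ℕ} (d : Fin (n + 1) →₀ ℕ) : d.degree = d 0 + wt d := by
  rw [Finsupp.degree_eq_sum, Fin.sum_univ_succ, wt]

lemma wt_upper (n m : ℕ) : IsUpperSet {d : Fin (n + 1) →₀ ℕ | m ≤ wt d} := by
  intro d e hde hd
  exact le_trans hd (Finset.sum_le_sum fun i _ => hde _)

lemma stdPt_zero (K : Type) [Field K] (n : ℕ) : stdPt K (n + 1) 0 = 1 := by simp [stdPt]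

lemma stdPt_succ (K : Type) [Field K] (n : ℕ) (i : Fin n) : stdPt K (n + 1) i.succ = 0 := by
  simp [stdPt]

lemma stdIdeal_pow (K : Type) [Field K] (n m : ℕ) :
    pointIdeal (stdPt K (n + 1)) ^ m = restrictSupportIdeal K _ (wt_upper n m) := by
  apply le_antisymm
  · induction m with
    | zero => intro x _ d _; simp
    | succ k ih =>
      rw [pow_succ]
      refine le_trans (Ideal.mul_mono_left ih) ?_
      rw [pointIdeal, Ideal.mul_le]
      intro f hf g hg
      have hg' : g ∈ restrictSupportIdeal K _ (wt_upper n 1) := by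
        refine (Ideal.span_le.2 ?_ : Ideal.span _ ≤ restrictSupportIdeal K _ (wt_upper n 1)) hg
        rintro g ⟨hg1, hg2⟩ d hd
        by_contra hcon
        have hw : wt d = 0 := by simpa using hcon
        have hdeg : d.degree = 1 := by
          by_contra h
          exact (mem_support_iff.1 hd) (hg1.coeff_eq_zero h)
        have hd0 : d 0 = 1 := by rw [degree_wt, hw] at hdeg; simpa using hdeg
        have hev : eval (stdPt K (n + 1)) g = coeff d g := by
          rw [eval_eq', Finset.sum_eq_single d]
          · rw [Fin.prod_univ_succ, stdPt_zero, one_pow, one_mul, Finset.prod_eq_one, mul_one]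
            intro i _
            have : d i.succ = 0 := by
              have := (Finset.sum_eq_zero_iff.1 hw) i (Finset.mem_univ _)
              exact this
            rw [this, pow_zero]
          · intro e he hne
            have hedeg : e.degree = 1 := by
              by_contra h
              exact (mem_support_iff.1 he) (hg1.coeff_eq_zero h)
            have : wt e ≠ 0 := by
              intro h0
              apply hne
              ext i
              refine Fin.cases ?_ (fun i => ?_) i
              · rw [degree_wt, h0] at hedeg; omega
              · have h1 : e i.succ = 0 := (Finset.sum_eq_zero_iff.1 h0) i (Finset.mem_univ _)
                have h2 : d i.succ = 0 := (Finset.sum_eq_zero_iff.1 hw) i (Finset.mem_univ _)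
                rw [h1, h2]
            obtain ⟨i, _, hi⟩ := Finset.exists_ne_zero_of_sum_ne_zero this
            rw [Fin.prod_univ_succ, Finset.prod_eq_zero (Finset.mem_univ i), mul_zero, mul_zero]
            rw [stdPt_succ, zero_pow hi]
          · intro h; exact absurd hd h
        rw [hg2] at hev
        exact (mem_support_iff.1 hd) hev.symm
      classical
      intro d hd
      obtain ⟨a, ha, b, hb, rfl⟩ := Finset.mem_add.1 (support_mul f g hd)
      have h1 : k ≤ wt a := hf ha
      have h2 : 1 ≤ wt b := hg' hb
      change k + 1 ≤ wt (a + b)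
      rw [wt_add]; omega
  · intro f hf
    rw [f.as_sum]
    refine Ideal.sum_mem _ fun d hd => ?_
    have hw : m ≤ wt d := hf hd
    refine Ideal.pow_le_pow_right hw ?_
    rw [monomial_eq, Finsupp.prod_fintype _ _ (by simp), wt, ← Finset.prod_pow_eq_pow_sum,
      Fin.prod_univ_succ, ← mul_assoc]
    refine Ideal.mul_mem_left _ _ (Ideal.prod_mem_prod fun i _ => Ideal.pow_mem_pow ?_ _)
    exact Ideal.subset_span ⟨isHomogeneous_X _ _, by simp [stdPt_succ]⟩

lemma finrank_restrictSupport (K : Type) [Field K] {N : ℕ} (S : Set (Fin N →₀ ℕ)) :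
    Module.finrank K (restrictSupport K S) = S.ncard := by
  rw [Module.finrank_eq_nat_card_basis (basisRestrictSupport K S), Nat.card_coe_set_eq]

lemma homog_eq_restrictSupport (K : Type) [Field K] (N t : ℕ) :
    homogeneousSubmodule (Fin N) K t = restrictSupport K {d | d.degree = t} :=
  homogeneousSubmodule_eq_finsupp_supported _ _ _

lemma degSet_eq (N t : ℕ) : {d : Fin N →₀ ℕ | d.degree = t} =
    (Finset.finsuppAntidiag (Finset.univ : Finset (Fin N)) t : Set (Fin N →₀ ℕ)) := by
  ext d
  simp [Finsupp.degree_eq_sum]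

lemma degSet_finite (N t : ℕ) : {d : Fin N →₀ ℕ | d.degree = t}.Finite := by
  rw [degSet_eq]; exact Finset.finite_toSet _

lemma degSet_ncard (n t : ℕ) : {d : Fin (n + 1) →₀ ℕ | d.degree = t}.ncard = (t + n).choose n := by
  rw [degSet_eq, Set.ncard_coe_finset, Finset.card_finsuppAntidiag_nat_eq_choose]
  simp only [Finset.card_univ, Fintype.card_fin]
  rw [show n + 1 + t - 1 = t + n by omega, Nat.choose_symm_add]

lemma hilbFn_std (K : Type) [Field K] (n m t : ℕ) :
    hilbFn K (pointIdeal (stdPt K (n + 1)) ^ m) t =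
      {d : Fin (n + 1) →₀ ℕ | d.degree = t ∧ wt d < m}.ncard := by
  have h1 : homogeneousSubmodule (Fin (n + 1)) K t ⊓
      (pointIdeal (stdPt K (n + 1)) ^ m).restrictScalars K =
      restrictSupport K {d | d.degree = t ∧ m ≤ wt d} := by
    rw [stdIdeal_pow, restrictScalars_restrictSupportIdeal, homog_eq_restrictSupport]
    ext f
    simp only [Submodule.mem_inf, mem_restrictSupport_iff]
    exact Set.subset_inter_iff.symm
  rw [hilbFn, gradedDim, h1, homog_eq_restrictSupport, finrank_restrictSupport,
    finrank_restrictSupport]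
  have h2 : {d : Fin (n + 1) →₀ ℕ | d.degree = t} =
      {d : Fin (n + 1) →₀ ℕ | d.degree = t ∧ wt d < m} ∪
      {d : Fin (n + 1) →₀ ℕ | d.degree = t ∧ m ≤ wt d} := by
    ext d; simp only [Set.mem_ofPred_eq, Set.mem_union]
    have := lt_or_ge (wt d) m
    tauto
  have hfin := degSet_finite (n + 1) t
  rw [h2, Set.ncard_union_eq ?_ (hfin.subset fun d hd => hd.1) (hfin.subset fun d hd => hd.1),
    Nat.add_sub_cancel]
  rw [Set.disjoint_left]; rintro d ⟨_, h⟩ ⟨_, h'⟩; omega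

lemma hilbFn_std_low (K : Type) [Field K] (n m t : ℕ) (h : t < m) :
    hilbFn K (pointIdeal (stdPt K (n + 1)) ^ m) t = (t + n).choose n := by
  rw [hilbFn_std, ← degSet_ncard]
  congr 1
  ext d
  simp only [Set.mem_ofPred_eq, and_iff_left_iff_imp]
  intro hd
  rw [degree_wt] at hd
  omega

lemma hilbFn_std_high (K : Type) [Field K] (n m t : ℕ) (h : m ≤ t) :
    hilbFn K (pointIdeal (stdPt K (n + 1)) ^ (m + 1)) t = (m + n).choose n := by
  rw [hilbFn_std, ← degSet_ncard]
  symm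
  have key : ∀ k, wt (Finsupp.single (0 : Fin (n + 1)) k) = 0 := by
    intro k; simp [wt]
  apply Set.ncard_congr (fun d _ => d + Finsupp.single 0 (t - m))
  · intro d hd
    simp only [Set.mem_ofPred_eq] at hd ⊢
    rw [wt_add, key, degree_wt, wt_add, key]
    rw [degree_wt] at hd
    simp; omega
  · intro d e _ _ hde; exact add_right_cancel hde
  · rintro d ⟨hd, hw⟩
    rw [degree_wt] at hd
    have hle : Finsupp.single 0 (t - m) ≤ d := by
      rw [Finsupp.single_le_iff]; omega
    have heq : d - Finsupp.single 0 (t - m) + Finsupp.single 0 (t - m) = d :=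
      tsub_add_cancel_of_le hle
    refine ⟨d - Finsupp.single 0 (t - m), ?_, heq⟩
    have h3 := wt_add (d - Finsupp.single 0 (t - m)) (Finsupp.single 0 (t - m))
    rw [heq, key] at h3
    simp only [Set.mem_ofPred_eq]
    rw [degree_wt, Finsupp.tsub_apply, Finsupp.single_eq_same]
    omega

lemma exists_coord {K : Type} [Field K] {n : ℕ} (p : Fin (n + 1) → K) (hp : p ≠ 0) :
    ∃ A : (Fin (n + 1) → K) ≃ₗ[K] (Fin (n + 1) → K), A (stdPt K (n + 1)) = p := by
  obtain ⟨k, hk⟩ := Function.ne_iff.1 hp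
  let B : (Fin (n + 1) → K) →ₗ[K] (Fin (n + 1) → K) :=
    LinearMap.funLeft K K (Equiv.swap 0 k) +
      (LinearMap.proj (0 : Fin (n + 1)) : (Fin (n + 1) → K) →ₗ[K] K).smulRight
        (p - Pi.single k 1)
  have hB : ∀ v j, B v j = v (Equiv.swap 0 k j) + v 0 * (p j - (Pi.single k 1 : _ → K) j) := by
    intro v j
    simp [B, LinearMap.funLeft_apply]
  have hinj : Function.Injective B := by
    rw [← LinearMap.ker_eq_bot, LinearMap.ker_eq_bot']
    intro v hv
    have h0 : v 0 = 0 := by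
      have := congrFun hv k
      rw [hB] at this
      simp at this
      have h' : v 0 * p k = 0 := by linear_combination this
      exact (mul_eq_zero.1 h').resolve_right hk
    funext j
    have := congrFun hv (Equiv.swap 0 k j)
    rw [hB, h0] at this
    simpa using this
  refine ⟨LinearEquiv.ofInjectiveEndo B hinj, ?_⟩
  funext j
  change B (stdPt K (n + 1)) j = p j
  rw [hB, stdPt_zero]
  have : stdPt K (n + 1) (Equiv.swap 0 k j) = (Pi.single k 1 : _ → K) j := by
    have h0 : ∀ i : Fin (n + 1), stdPt K (n + 1) i = if i = 0 then 1 else 0 := by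
      intro i; simp only [stdPt, Fin.ext_iff, Fin.val_zero]
    rw [h0, Pi.single_apply]
    have hiff : Equiv.swap 0 k j = 0 ↔ j = k := by
      rw [Equiv.swap_apply_eq_iff, Equiv.swap_apply_left]
    by_cases hjk : j = k
    · rw [if_pos hjk, if_pos (hiff.2 hjk)]
    · rw [if_neg hjk, if_neg fun h => hjk (hiff.1 h)]
  rw [this]; ring

lemma gradedDim_le {K : Type} [Field K] [Infinite K] {N : ℕ}
    (A : (Fin N → K) ≃ₗ[K] (Fin N → K)) (q : Fin N → K) (m t : ℕ) :
    gradedDim K (pointIdeal (A q) ^ m) t ≤ gradedDim K (pointIdeal q ^ m) t := by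
  let f : ↥(homogeneousSubmodule (Fin N) K t ⊓ (pointIdeal (A q) ^ m).restrictScalars K) →ₗ[K]
      ↥(homogeneousSubmodule (Fin N) K t ⊓ (pointIdeal q ^ m).restrictScalars K) :=
    (pull A.toLinearMap).toLinearMap.restrict fun x hx =>
      ⟨pull_homog _ hx.1, pull_mem_pow A.toLinearMap q m hx.2⟩
  have hfin : FiniteDimensional K (homogeneousSubmodule (Fin N) K t) :=
    Module.Finite.iff_fg.2 (homogeneousSubmodule_fg _ _ _)
  have hfin2 : FiniteDimensional K
      ↥(homogeneousSubmodule (Fin N) K t ⊓ (pointIdeal q ^ m).restrictScalars K) :=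
    Submodule.finiteDimensional_of_le inf_le_left
  refine LinearMap.finrank_le_finrank_of_injective (f := f) ?_
  intro x y hxy
  have h1 : pull A.toLinearMap x.1 = pull A.toLinearMap y.1 := congrArg Subtype.val hxy
  have h2 := congrArg (pull A.symm.toLinearMap) h1
  rw [pull_pull, pull_pull] at h2
  · exact Subtype.ext h2
  · intro x; simp
  · intro x; simp

lemma hilbFn_pt {K : Type} [Field K] [Infinite K] {n : ℕ} (p : Fin (n + 1) → K) (hp : p ≠ 0)
    (m t : ℕ) :
    hilbFn K (pointIdeal p ^ m) t = hilbFn K (pointIdeal (stdPt K (n + 1)) ^ m) t := by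
  obtain ⟨A, hA⟩ := exists_coord p hp
  rw [hilbFn, hilbFn]
  congr 1
  apply le_antisymm
  · rw [← hA]; exact gradedDim_le A _ m t
  · have : stdPt K (n + 1) = A.symm p := by rw [← hA]; simp
    rw [this]; exact gradedDim_le A.symm _ m t

lemma hilbFn_pt_le {K : Type} [Field K] [Infinite K] {n : ℕ} (p : Fin (n + 1) → K) (hp : p ≠ 0)
    (m t : ℕ) (hm : 0 < m) :
    hilbFn K (pointIdeal p ^ m) t ≤ (m + n - 1).choose n := by
  obtain ⟨k, rfl⟩ : ∃ k, m = k + 1 := ⟨m - 1, by omega⟩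
  rw [hilbFn_pt p hp, show k + 1 + n - 1 = k + n by omega]
  rcases le_or_gt k t with h | h
  · exact (hilbFn_std_high K n k t h).le
  · rw [hilbFn_std_low K n _ t (by omega)]
    exact Nat.choose_le_choose _ (by omega)

lemma hilbFn_pt_eq_iff {K : Type} [Field K] [Infinite K] {n : ℕ} (p : Fin (n + 1) → K)
    (hp : p ≠ 0) (m t : ℕ) (hm : 0 < m) :
    hilbFn K (pointIdeal p ^ m) t = (m + n - 1).choose n ↔ n = 0 ∨ m ≤ t + 1 := by
  obtain ⟨k, rfl⟩ : ∃ k, m = k + 1 := ⟨m - 1, by omega⟩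
  rw [hilbFn_pt p hp, show k + 1 + n - 1 = k + n by omega]
  rcases le_or_gt k t with h | h
  · rw [hilbFn_std_high K n k t h]
    simp [h]
  · rw [hilbFn_std_low K n _ t (by omega)]
    constructor
    · intro heq
      by_contra hcon
      push Not at hcon
      obtain ⟨n', rfl⟩ : ∃ n', n = n' + 1 := ⟨n - 1, by omega⟩
      have h1 : (t + (n' + 1)).choose (n' + 1) < (t + (n' + 1) + 1).choose (n' + 1) := by
        rw [Nat.choose_succ_succ']
        have : 0 < (t + (n' + 1)).choose n' := Nat.choose_pos (by omega)
        omega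
      have h2 : (t + (n' + 1) + 1).choose (n' + 1) ≤ (k + (n' + 1)).choose (n' + 1) :=
        Nat.choose_le_choose _ (by omega)
      omega
    · rintro (rfl | h')
      · simp
      · omega

/-! ### Linear algebra -/

lemma hilb_add {K : Type} [Field K] {N : ℕ} (I : Ideal (MvPolynomial (Fin N) K)) (t : ℕ) :
    hilbFn K I t = Module.finrank K
      (↥(homogeneousSubmodule (Fin N) K t) ⧸
        (I.restrictScalars K).comap (homogeneousSubmodule (Fin N) K t).subtype) := by
  have hfin : FiniteDimensional K (homogeneousSubmodule (Fin N) K t) :=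
    Module.Finite.iff_fg.2 (homogeneousSubmodule_fg _ _ _)
  have h := Submodule.finrank_quotient_add_finrank
    ((I.restrictScalars K).comap (homogeneousSubmodule (Fin N) K t).subtype)
  have h2 : gradedDim K I t = Module.finrank K
      ((I.restrictScalars K).comap (homogeneousSubmodule (Fin N) K t).subtype) := by
    rw [gradedDim, ← Submodule.map_comap_subtype]
    exact (LinearEquiv.finrank_eq (Submodule.equivMapOfInjective _
      (Submodule.injective_subtype _) _)).symm
  rw [hilbFn, h2]
  omega

lemma lin_iff {K V : Type*} [Field K] [AddCommGroup V] [Module K V] [FiniteDimensional K V]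
    {s : ℕ} (U : Fin s → Submodule K V) (c : Fin s → ℕ)
    (hle2 : ∀ i, Module.finrank K (V ⧸ U i) ≤ c i) :
    Module.finrank K (V ⧸ ⨅ i, U i) = ∑ i, c i ↔
      (∀ g : Fin s → V, ∃ f, ∀ i, f - g i ∈ U i) ∧ ∀ i, Module.finrank K (V ⧸ U i) = c i := by
  let Φ : V →ₗ[K] (∀ i, V ⧸ U i) := LinearMap.pi fun i => (U i).mkQ
  have hker : LinearMap.ker Φ = ⨅ i, U i := by
    simp [Φ, LinearMap.ker_pi]
  have hrange : Module.finrank K (V ⧸ ⨅ i, U i) = Module.finrank K (LinearMap.range Φ) := by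
    rw [← hker]
    exact (LinearMap.quotKerEquivRange Φ).finrank_eq
  have htot : Module.finrank K (∀ i, V ⧸ U i) = ∑ i, Module.finrank K (V ⧸ U i) :=
    Module.finrank_pi_fintype K
  have hle : Module.finrank K (LinearMap.range Φ) ≤ ∑ i, Module.finrank K (V ⧸ U i) := by
    rw [← htot]; exact Submodule.finrank_le _
  have hsurj : (∀ g : Fin s → V, ∃ f, ∀ i, f - g i ∈ U i) ↔ Function.Surjective Φ := by
    constructor
    · intro h y
      choose g hg using fun i => (U i).mkQ_surjective (y i)
      obtain ⟨f, hfi⟩ := h g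
      refine ⟨f, ?_⟩
      funext i
      rw [← hg i]
      exact (Submodule.Quotient.eq (U i)).2 (hfi i)
    · intro h g
      obtain ⟨f, hf⟩ := h fun i => (U i).mkQ (g i)
      exact ⟨f, fun i => (Submodule.Quotient.eq (U i)).1 (congrFun hf i)⟩
  have heach : (∀ i, Module.finrank K (V ⧸ U i) = c i) ↔
      ∑ i, Module.finrank K (V ⧸ U i) = ∑ i, c i := by
    rw [Finset.sum_eq_sum_iff_of_le fun i _ => hle2 i]
    simp
  have hle3 : ∑ i, Module.finrank K (V ⧸ U i) ≤ ∑ i, c i := Finset.sum_le_sum fun i _ => hle2 i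
  rw [hrange, hsurj, heach]
  constructor
  · intro h
    refine ⟨?_, by omega⟩
    rw [← LinearMap.range_eq_top]
    apply Submodule.eq_top_of_finrank_eq
    rw [htot]; omega
  · rintro ⟨h1, h2⟩
    rw [LinearMap.range_eq_top.2 h1, finrank_top, htot, h2]

lemma hilb_eq_iff {K : Type} [Field K] [Infinite K] {n s : ℕ} (p : Fin s → Fin (n + 1) → K)
    (hp : ∀ i, p i ≠ 0) (m : Fin s → ℕ) (hm : ∀ i, 0 < m i) (t : ℕ) :
    hilbFn K (fatIdeal p m) t = fatMult n m ↔
      SurjAt p m t ∧ ∀ i, n = 0 ∨ m i ≤ t + 1 := by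
  have hfin : FiniteDimensional K (homogeneousSubmodule (Fin (n + 1)) K t) :=
    Module.Finite.iff_fg.2 (homogeneousSubmodule_fg _ _ _)
  have hinf : ((fatIdeal p m).restrictScalars K).comap
      (homogeneousSubmodule (Fin (n + 1)) K t).subtype =
      ⨅ i, ((pointIdeal (p i) ^ m i).restrictScalars K).comap
        (homogeneousSubmodule (Fin (n + 1)) K t).subtype := by
    ext x
    simp only [fatIdeal, Submodule.mem_comap, Submodule.restrictScalars_mem, Submodule.mem_iInf]
  have key := lin_iff (K := K) (fun i => ((pointIdeal (p i) ^ m i).restrictScalars K).comap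
        (homogeneousSubmodule (Fin (n + 1)) K t).subtype) (fun i => (m i + n - 1).choose n)
    (fun i => by rw [← hilb_add]; exact hilbFn_pt_le (p i) (hp i) (m i) t (hm i))
  rw [← hinf, ← hilb_add] at key
  rw [fatMult, key]
  refine and_congr ?_ (forall_congr' fun i => ?_)
  · constructor
    · intro h g hg
      obtain ⟨f, hf⟩ := h fun i => ⟨g i, hg i⟩
      exact ⟨f.1, f.2, hf⟩
    · intro h g
      obtain ⟨f, hf, hfi⟩ := h (fun i => (g i).1) fun i => (g i).2
      exact ⟨⟨f, hf⟩, hfi⟩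
  · rw [← hilb_add]
    exact hilbFn_pt_eq_iff (p i) (hp i) (m i) t (hm i)

/-- Proposition 3.4: a lower bound for `reg(Z_α)` transfers to `reg(Z)`. -/
theorem stmt19 {K : Type} [Field K] [IsAlgClosed K] {n r s : ℕ} (hr : r ≤ n)
    (φ : (Fin (r + 1) → K) →ₗ[K] (Fin (n + 1) → K)) (hφ : Function.Injective φ)
    (q : Fin s → Fin (r + 1) → K) (hq : ProjDistinct q)
    (m : Fin s → ℕ) (hm : ∀ i, 0 < m i)
    (p : Fin s → Fin (n + 1) → K) (hp : ∀ i, p i = φ (q i))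
    (b : ℕ) (hb : b < regFat K q m) :
    b < regFat K p m := by
  have hinf : Infinite K := IsAlgClosed.instInfinite
  obtain rfl : p = fun i => φ (q i) := funext hp
  have hpd : ProjDistinct fun i => φ (q i) := by
    refine ⟨fun i h => hq.1 i (hφ (by simpa using h)), fun i j hij c h => hq.2 i j hij c (hφ ?_)⟩
    simpa using h
  have hne : {t | hilbFn K (fatIdeal (fun i => φ (q i)) m) t = fatMult n m}.Nonempty := by
    obtain ⟨T, hT⟩ := exists_surjAt _ m hpd
    refine ⟨T + ∑ i, m i, (hilb_eq_iff _ hpd.1 m hm _).2 ⟨hT _ (by omega), fun i => Or.inr ?_⟩⟩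
    have := Finset.single_le_sum (f := m) (fun _ _ => Nat.zero_le _) (Finset.mem_univ i)
    omega
  have hmem := Nat.sInf_mem hne
  obtain ⟨h1, h2⟩ := (hilb_eq_iff _ hpd.1 m hm _).1 hmem
  refine lt_of_lt_of_le hb (Nat.sInf_le ?_)
  refine (hilb_eq_iff q hq.1 m hm _).2 ⟨SurjAt.pull φ hφ q m h1, fun i => ?_⟩
  rcases h2 i with h | h
  · left; omega
  · right; exact h
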